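/- Scale bounds for the true limiting normalized scores (key estimate in the proof of Corollary 2.3). Fix x ∈ X and define, for σ ∈ (0,1), the true limiting normalized score S_q(h,a;σ) := q_σ(x^{h→a})/q_σ(x) for h ∈ {1,…,H} and tokens a ≠ x^h. Then there exist constants a_x > 0, A_x > 0, and σ₀ ∈ (0,1) such that for all σ ∈ (0,σ₀), all h, and all a ≠ x^h: if d(x^{h→a},D) < d(x,D) then S_q(h,a;σ) ≥ a_x·σ^{−1}, and if d(x^{h→a},D) ≥ d(x,D) then S_q(h,a;σ) ≤ A_x. -/

import Mathlib

/-- Uniform-corrupted marginal `q_σ(x)`. -/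
noncomputable def qUnif (K H : ℕ) (p : (Fin H → Fin K) → ℝ) (σ : ℝ)
    (x : Fin H → Fin K) : ℝ :=
  ∑ x0 : Fin H → Fin K, p x0 *
    ∏ i : Fin H, ((1 - σ) * (if x i = x0 i then (1 : ℝ) else 0) + σ / K)

/-- Hamming distance from `x` to the support `D = {z : p z ≠ 0}` of `p`. -/
noncomputable def distSupp (K H : ℕ) (p : (Fin H → Fin K) → ℝ)
    (x : Fin H → Fin K) : ℕ :=
  sInf {n : ℕ | ∃ z : Fin H → Fin K, p z ≠ 0 ∧ hammingDist x z = n}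

/-!
The corruption kernel sends `z` to `x` with probability comparable to `σ ^ hammingDist x z`, up to
the constant factor `K ^ H`. Averaging over the finitely many `z` in the support, the closest ones
dominate, so `q_σ(x)` is comparable to `σ ^ d(x, D)` and the score `q_σ(y) / q_σ(x)` to
`σ ^ (d(y, D) - d(x, D))`.
-/

section UniformKernel

variable {ι α : Type*} [Fintype ι] [DecidableEq α]

theorem prod_ite_one_eq_pow_hammingDist {M : Type*} [CommMonoid M] (x z : ι → α) (c : M) :
    ∏ i, (if x i = z i then 1 else c) = c ^ hammingDist x z := by
  simp [Finset.prod_ite, hammingDist]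

variable [Fintype α]

/-- The transition probability from `z` to `x` of the corruption channel which independently
resamples each coordinate uniformly from the alphabet `α` with probability `σ`. -/
noncomputable def uniformKernel (σ : ℝ) (x z : ι → α) : ℝ :=
  ∏ i, ((1 - σ) * (if x i = z i then (1 : ℝ) else 0) + σ / Fintype.card α)

variable {σ : ℝ}

theorem uniformKernel_le_pow_hammingDist (hσ : σ ∈ Set.Icc (0 : ℝ) 1) (x z : ι → α) :
    uniformKernel σ x z ≤ σ ^ hammingDist x z := by
  obtain ⟨hσ₀, hσ₁⟩ := hσ
  rw [← prod_ite_one_eq_pow_hammingDist, uniformKernel]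
  have resample_nonneg : 0 ≤ σ / Fintype.card α := by positivity
  refine Finset.prod_le_prod (fun i _ ↦ ?_) fun i _ ↦ ?_
  · split_ifs <;> linarith
  · have : Nonempty α := ⟨x i⟩
    have resample_le : σ / Fintype.card α ≤ σ :=
      div_le_self hσ₀ (Nat.one_le_cast.2 Fintype.card_pos)
    split_ifs <;> linarith

theorem pow_hammingDist_le_uniformKernel (hσ : σ ∈ Set.Icc (0 : ℝ) 1) (x z : ι → α) :
    (Fintype.card α : ℝ)⁻¹ ^ Fintype.card ι * σ ^ hammingDist x z ≤ uniformKernel σ x z := by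
  obtain ⟨hσ₀, hσ₁⟩ := hσ
  rw [← prod_ite_one_eq_pow_hammingDist, ← Finset.card_univ (α := ι), ← Finset.prod_const,
    ← Finset.prod_mul_distrib, uniformKernel]
  refine Finset.prod_le_prod (fun i _ ↦ by split_ifs <;> positivity) fun i _ ↦ ?_
  have : Nonempty α := ⟨x i⟩
  have inv_card_le_one : (Fintype.card α : ℝ)⁻¹ ≤ 1 :=
    inv_le_one_of_one_le₀ (Nat.one_le_cast.2 Fintype.card_pos)
  rw [div_eq_inv_mul]
  split_ifs
  · -- A convex combination of `1` and `(card α)⁻¹` is at least `(card α)⁻¹`.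
    linarith [mul_nonneg (sub_nonneg.2 hσ₁) (sub_nonneg.2 inv_card_le_one)]
  · simp

theorem uniformKernel_nonneg (hσ : σ ∈ Set.Icc (0 : ℝ) 1) (x z : ι → α) :
    0 ≤ uniformKernel σ x z :=
  have := hσ.1
  le_trans (by positivity) (pow_hammingDist_le_uniformKernel hσ x z)

end UniformKernel

theorem exists_gt_forall_le_of_gt {ι α : Type*} [Finite ι] [LinearOrder α] [NoMaxOrder α]
    (f : ι → α) (a : α) : ∃ m > a, ∀ i, a < f i → m ≤ f i := by
  obtain ⟨m, hm⟩ :=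
    (Set.finite_range fun i : {i // a < f i} ↦ (⟨f i, i.2⟩ : Set.Ioi a)).bddBelow
  exact ⟨m, m.2, fun i hi ↦ hm ⟨⟨i, hi⟩, rfl⟩⟩

section Marginal

variable {K H : ℕ} {p : (Fin H → Fin K) → ℝ} {σ : ℝ}

theorem distSupp_le_hammingDist {z : Fin H → Fin K} (hz : p z ≠ 0) (x : Fin H → Fin K) :
    distSupp K H p x ≤ hammingDist x z :=
  Nat.sInf_le ⟨z, hz, rfl⟩

theorem exists_hammingDist_eq_distSupp (hp : p ≠ 0) (x : Fin H → Fin K) :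
    ∃ z, p z ≠ 0 ∧ hammingDist x z = distSupp K H p x := by
  obtain ⟨z, hz⟩ := Function.ne_iff.1 hp
  have distances_nonempty : {n | ∃ z, p z ≠ 0 ∧ hammingDist x z = n}.Nonempty := ⟨_, z, hz, rfl⟩
  exact Nat.sInf_mem distances_nonempty

theorem qUnif_eq_sum_uniformKernel (p : (Fin H → Fin K) → ℝ) (σ : ℝ) (x : Fin H → Fin K) :
    qUnif K H p σ x = ∑ z, p z * uniformKernel σ x z := by
  simp only [qUnif, uniformKernel, Fintype.card_fin]

theorem qUnif_le_sum_mul_pow_distSupp (hp₀ : ∀ z, 0 ≤ p z) (hσ : σ ∈ Set.Icc (0 : ℝ) 1)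
    (x : Fin H → Fin K) :
    qUnif K H p σ x ≤ (∑ z, p z) * σ ^ distSupp K H p x := by
  rw [qUnif_eq_sum_uniformKernel, Finset.sum_mul]
  refine Finset.sum_le_sum fun z _ ↦ ?_
  rcases eq_or_ne (p z) 0 with hz | hz
  · simp [hz]
  · refine mul_le_mul_of_nonneg_left ?_ (hp₀ z)
    calc uniformKernel σ x z
        ≤ σ ^ hammingDist x z := uniformKernel_le_pow_hammingDist hσ x z
      _ ≤ σ ^ distSupp K H p x :=
          pow_le_pow_of_le_one hσ.1 hσ.2 (distSupp_le_hammingDist hz x)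

theorem mul_pow_distSupp_le_qUnif (hp₀ : ∀ z, 0 ≤ p z) (hp : p ≠ 0) {m : ℝ}
    (hm : ∀ z, 0 < p z → m ≤ p z) (hσ : σ ∈ Set.Icc (0 : ℝ) 1) (x : Fin H → Fin K) :
    m * (K : ℝ)⁻¹ ^ H * σ ^ distSupp K H p x ≤ qUnif K H p σ x := by
  obtain ⟨z, hz, hxz⟩ := exists_hammingDist_eq_distSupp hp x
  have kernel_ge : (K : ℝ)⁻¹ ^ H * σ ^ distSupp K H p x ≤ uniformKernel σ x z := by
    simpa only [Fintype.card_fin, hxz] using pow_hammingDist_le_uniformKernel hσ x z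
  have hσ₀ : 0 ≤ σ := hσ.1
  calc m * (K : ℝ)⁻¹ ^ H * σ ^ distSupp K H p x
      = m * ((K : ℝ)⁻¹ ^ H * σ ^ distSupp K H p x) := mul_assoc _ _ _
    _ ≤ p z * ((K : ℝ)⁻¹ ^ H * σ ^ distSupp K H p x) :=
        mul_le_mul_of_nonneg_right (hm z ((hp₀ z).lt_of_ne' hz)) (by positivity)
    _ ≤ p z * uniformKernel σ x z := mul_le_mul_of_nonneg_left kernel_ge (hp₀ z)
    _ ≤ ∑ z, p z * uniformKernel σ x z :=
        Finset.single_le_sum (fun z _ ↦ mul_nonneg (hp₀ z) (uniformKernel_nonneg hσ x z))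
          (Finset.mem_univ z)
    _ = qUnif K H p σ x := (qUnif_eq_sum_uniformKernel p σ x).symm

theorem exists_pow_distSupp_le_qUnif_le (hp₀ : ∀ z, 0 ≤ p z) (hp : p ≠ 0) :
    ∃ c > 0, ∃ C > 0, ∀ σ ∈ Set.Icc (0 : ℝ) 1, ∀ x,
      c * σ ^ distSupp K H p x ≤ qUnif K H p σ x ∧
        qUnif K H p σ x ≤ C * σ ^ distSupp K H p x := by
  obtain ⟨m, hm₀, hm⟩ := exists_gt_forall_le_of_gt p 0
  obtain ⟨z, -⟩ := Function.ne_iff.1 hp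
  have inv_card_pow_pos : 0 < (K : ℝ)⁻¹ ^ H := by
    -- `K = 0` is possible only for `H = 0`, where the power is `1`.
    rw [← Fin.prod_const]
    exact Finset.prod_pos fun i _ ↦ inv_pos.2 (Nat.cast_pos.2 (z i).pos)
  exact ⟨m * (K : ℝ)⁻¹ ^ H, mul_pos hm₀ inv_card_pow_pos,
    ∑ z, p z, Fintype.sum_pos (lt_of_le_of_ne hp₀ hp.symm),
    fun σ hσ x ↦ ⟨mul_pow_distSupp_le_qUnif hp₀ hp hm hσ x,
      qUnif_le_sum_mul_pow_distSupp hp₀ hσ x⟩⟩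

theorem exists_zpow_distSupp_sub_le_qUnif_div_le (hp₀ : ∀ z, 0 ≤ p z) (hp : p ≠ 0) :
    ∃ a > 0, ∃ A > 0, ∀ σ ∈ Set.Ioo (0 : ℝ) 1, ∀ x y,
      a * σ ^ ((distSupp K H p y : ℤ) - distSupp K H p x) ≤ qUnif K H p σ y / qUnif K H p σ x ∧
        qUnif K H p σ y / qUnif K H p σ x ≤
          A * σ ^ ((distSupp K H p y : ℤ) - distSupp K H p x) := by
  obtain ⟨c, hc, C, hC, hq⟩ := exists_pow_distSupp_le_qUnif_le hp₀ hp
  refine ⟨c / C, div_pos hc hC, C / c, div_pos hC hc, fun σ hσ x y ↦ ?_⟩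
  have hσ₀ : 0 < σ := hσ.1
  obtain ⟨hx_ge, hx_le⟩ := hq σ (Set.Ioo_subset_Icc_self hσ) x
  obtain ⟨hy_ge, hy_le⟩ := hq σ (Set.Ioo_subset_Icc_self hσ) y
  have hx_pos : 0 < qUnif K H p σ x := lt_of_lt_of_le (by positivity) hx_ge
  have hy_nonneg : 0 ≤ qUnif K H p σ y := le_trans (by positivity) hy_ge
  rw [zpow_sub₀ hσ₀.ne', zpow_natCast, zpow_natCast, div_mul_div_comm, div_mul_div_comm]
  exact ⟨div_le_div₀ hy_nonneg hy_ge hx_pos hx_le,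
    div_le_div₀ (by positivity) hy_le (by positivity) hx_ge⟩

theorem true_score_scale_bounds_general (hp₀ : ∀ z, 0 ≤ p z) (hp : p ≠ 0) :
    ∃ a > (0 : ℝ), ∃ A > (0 : ℝ), ∀ σ ∈ Set.Ioo (0 : ℝ) 1, ∀ x y : Fin H → Fin K,
      (distSupp K H p y < distSupp K H p x →
        a * σ⁻¹ ≤ qUnif K H p σ y / qUnif K H p σ x) ∧
      (distSupp K H p x ≤ distSupp K H p y →
        qUnif K H p σ y / qUnif K H p σ x ≤ A) := by
  obtain ⟨a, ha, A, hA, hscore⟩ := exists_zpow_distSupp_sub_le_qUnif_div_le hp₀ hp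
  refine ⟨a, ha, A, hA, fun σ hσ x y ↦ ⟨fun hcloser ↦ ?_, fun hfarther ↦ ?_⟩⟩
  · calc a * σ⁻¹
        = a * σ ^ (-1 : ℤ) := by rw [zpow_neg_one]
      _ ≤ a * σ ^ ((distSupp K H p y : ℤ) - distSupp K H p x) :=
          mul_le_mul_of_nonneg_left
            (zpow_le_zpow_right_of_le_one₀ hσ.1 hσ.2.le (by lia)) ha.le
      _ ≤ qUnif K H p σ y / qUnif K H p σ x := (hscore σ hσ x y).1
  · calc qUnif K H p σ y / qUnif K H p σ x
        ≤ A * σ ^ ((distSupp K H p y : ℤ) - distSupp K H p x) := (hscore σ hσ x y).2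
      _ ≤ A * 1 :=
          mul_le_mul_of_nonneg_left (zpow_le_one₀ hσ.1 hσ.2.le (by lia)) hA.le
      _ = A := mul_one A

end Marginal

/-- Scale bounds for the true limiting normalized scores
`S_q(h,a;σ) = q_σ(x^{h→a})/q_σ(x)`: there exist `a_x, A_x > 0` and `σ₀ ∈ (0,1)`
such that for all `σ ∈ (0,σ₀)`, support-improving edits have score at least
`a_x σ⁻¹` while all other edits have score at most `A_x`. -/
theorem true_score_scale_bounds
    (K H : ℕ) (hK : 2 ≤ K) (hH : 1 ≤ H)
    (p : (Fin H → Fin K) → ℝ) (hp0 : ∀ v, 0 ≤ p v) (hp1 : ∑ v, p v = 1)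
    (x : Fin H → Fin K) :
    ∃ ax > (0 : ℝ), ∃ Ax > (0 : ℝ), ∃ σ₀ ∈ Set.Ioo (0 : ℝ) 1,
      ∀ σ ∈ Set.Ioo (0 : ℝ) σ₀, ∀ h : Fin H, ∀ a : Fin K, a ≠ x h →
        (distSupp K H p (Function.update x h a) < distSupp K H p x →
          ax * σ⁻¹ ≤ qUnif K H p σ (Function.update x h a) / qUnif K H p σ x) ∧
        (distSupp K H p x ≤ distSupp K H p (Function.update x h a) →
          qUnif K H p σ (Function.update x h a) / qUnif K H p σ x ≤ Ax) := by
  obtain ⟨a, ha, A, hA, hscore⟩ := true_score_scale_bounds_general hp0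
    (by rintro rfl; simp at hp1 : p ≠ 0)
  exact ⟨a, ha, A, hA, 1 / 2, by norm_num, fun σ hσ _ _ _ ↦
    hscore σ ⟨hσ.1, hσ.2.trans one_half_lt_one⟩ _ _⟩
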